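/- Let H be a quasitriangular bialgebra with universal R-matrix R and let τ be an involutive coalgebra and anti-algebra automorphism of H. Define maps Φ⁺, Φ⁻: H*_op → H by Φ⁺(η) = ⟨η, τ(R₁)⟩ τ(R₂) and Φ⁻(η) = ⟨η, R₂⟩ R₁. Then the map Φ: H*_op → H⊗H given by Φ(η) = Φ⁺(η⁽¹⁾) ⊗ Φ⁻(η⁽²⁾) is a bialgebra homomorphism from H*_op into the twisted tensor square H ⊗_{R_τ} H (the bialgebra which equals H⊗H as an algebra, with comultiplication twisted by the cocycle (R_τ)₂₃ where R_τ = (τ⊗τ)(R⁻¹)). -/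

import Mathlib

open TensorProduct

section QT

variable (k H : Type*) [Field k] [Ring H] [Bialgebra k H]

/-- `(Δ ⊗ id)` as a map `H ⊗ H → H ⊗ (H ⊗ H)`. -/
noncomputable def deltaL : H ⊗[k] H →ₗ[k] H ⊗[k] (H ⊗[k] H) :=
  (TensorProduct.assoc k H H H).toLinearMap ∘ₗ
    TensorProduct.map (Coalgebra.comul (R := k)) LinearMap.id

/-- `(id ⊗ Δ)` as a map `H ⊗ H → H ⊗ (H ⊗ H)`. -/
noncomputable def deltaR : H ⊗[k] H →ₗ[k] H ⊗[k] (H ⊗[k] H) :=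
  TensorProduct.map LinearMap.id (Coalgebra.comul (R := k))

/-- embedding of `H ⊗ H` on legs 1, 2 of `H ⊗ H ⊗ H`. -/
noncomputable def leg12 : H ⊗[k] H →ₗ[k] H ⊗[k] (H ⊗[k] H) :=
  TensorProduct.map LinearMap.id ((TensorProduct.mk k H H).flip (1 : H))

/-- embedding of `H ⊗ H` on legs 1, 3 of `H ⊗ H ⊗ H`. -/
noncomputable def leg13 : H ⊗[k] H →ₗ[k] H ⊗[k] (H ⊗[k] H) :=
  TensorProduct.map LinearMap.id (TensorProduct.mk k H H (1 : H))

/-- embedding of `H ⊗ H` on legs 2, 3 of `H ⊗ H ⊗ H`. -/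
noncomputable def leg23 : H ⊗[k] H →ₗ[k] H ⊗[k] (H ⊗[k] H) :=
  TensorProduct.mk k H (H ⊗[k] H) (1 : H)

/-- `R` (with two-sided inverse `Rinv`) is a universal R-matrix (quasitriangular
structure) on the bialgebra `H`. -/
noncomputable def IsUnivRMatrix (R Rinv : H ⊗[k] H) : Prop :=
  R * Rinv = 1 ∧ Rinv * R = 1 ∧
  deltaL k H R = leg13 k H R * leg23 k H R ∧
  deltaR k H R = leg13 k H R * leg12 k H R ∧
  ∀ h : H, R * Coalgebra.comul h =
    (TensorProduct.comm k H H) (Coalgebra.comul h) * R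

/-- `τ` is an involutive coalgebra map and algebra anti-automorphism of `H`. -/
noncomputable def IsSkewInvolution (τ : H →ₗ[k] H) : Prop :=
  (∀ x : H, τ (τ x) = x) ∧ (∀ x y : H, τ (x * y) = τ y * τ x) ∧ τ 1 = 1 ∧
  Coalgebra.comul (R := k) ∘ₗ τ = (TensorProduct.map τ τ) ∘ₗ Coalgebra.comul ∧
  Coalgebra.counit (R := k) ∘ₗ τ = Coalgebra.counit

end QT

section DualAlg

variable (k H : Type*) [Field k] [Ring H] [Bialgebra k H]

/-- convolution product on the dual `H* = Module.Dual k H`. -/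
noncomputable def conv (f g : Module.Dual k H) : Module.Dual k H :=
  (LinearMap.mul' k k) ∘ₗ (TensorProduct.map f g) ∘ₗ (Coalgebra.comul (R := k))

/-- left coregular action `h ⇀ a`, `(h ⇀ a)(x) = a (x * h)`. -/
noncomputable def lact (h : H) (a : Module.Dual k H) : Module.Dual k H :=
  a ∘ₗ LinearMap.mulRight k h

/-- right coregular action `a ↼ h`, `(a ↼ h)(x) = a (h * x)`. -/
noncomputable def ract (a : Module.Dual k H) (h : H) : Module.Dual k H :=
  a ∘ₗ LinearMap.mulLeft k h

/-- an invariant element of `H*`: `h ⇀ a = a ↼ h` for all `h`. -/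
noncomputable def IsInvariantDual (a : Module.Dual k H) : Prop :=
  ∀ h : H, lact k H h a = ract k H a h

end DualAlg

section Phi

variable (k H : Type*) [Field k] [Ring H] [Bialgebra k H]

/-- contraction against the first leg of a fixed `u ∈ H ⊗ H`:  `η ↦ (η ⊗ id)(u)`. -/
noncomputable def contractFst (u : H ⊗[k] H) : Module.Dual k H →ₗ[k] H where
  toFun f := (TensorProduct.lid k H) ((TensorProduct.map f LinearMap.id) u)
  map_add' f g := by simp [TensorProduct.map_add_left]
  map_smul' c f := by simp [TensorProduct.map_smul_left]

/-- contraction against the second leg of a fixed `u ∈ H ⊗ H`:  `η ↦ (id ⊗ η)(u)`. -/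
noncomputable def contractSnd (u : H ⊗[k] H) : Module.Dual k H →ₗ[k] H where
  toFun f := (TensorProduct.rid k H) ((TensorProduct.map LinearMap.id f) u)
  map_add' f g := by simp [TensorProduct.map_add_right]
  map_smul' c f := by simp [TensorProduct.map_smul_right]

variable [FiniteDimensional k H]

/-- dual comultiplication on `H*` (dual to the multiplication of `H`). -/
noncomputable def comulDual :
    Module.Dual k H →ₗ[k] Module.Dual k H ⊗[k] Module.Dual k H :=
  (TensorProduct.dualDistribEquiv k H H).symm.toLinearMap ∘ₗ
    (LinearMap.mul' k H).dualMap

/-- the natural comultiplication of `H ⊗ H`, `x ⊗ y ↦ (x⁽¹⁾ ⊗ y⁽¹⁾) ⊗ (x⁽²⁾ ⊗ y⁽²⁾)`. -/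
noncomputable def comulSq :
    H ⊗[k] H →ₗ[k] (H ⊗[k] H) ⊗[k] (H ⊗[k] H) :=
  (TensorProduct.tensorTensorTensorComm k H H H H).toLinearMap ∘ₗ
    TensorProduct.map (Coalgebra.comul (R := k)) (Coalgebra.comul (R := k))

/-- embedding of `H ⊗ H` on legs 2, 3 of `(H ⊗ H) ⊗ (H ⊗ H)`. -/
noncomputable def sqleg23 : H ⊗[k] H →ₗ[k] (H ⊗[k] H) ⊗[k] (H ⊗[k] H) :=
  TensorProduct.map (TensorProduct.mk k H H (1 : H)) ((TensorProduct.mk k H H).flip (1 : H))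

end Phi

/-!
An element `X` of `H ⊗ A` defines a linear map `η ↦ (η ⊗ id)(X)` from `H*` to `A`.
With `S = (τ ⊗ τ)(R)` and `Q = R₂₁`, the map `Φ` corresponds to `X = S₀₁ Q₀₂`. It is multiplicative
on `H*_op` because `(Δ ⊗ id)(S) = S₂₃ S₁₃`, and similarly for `Q`. For the comultiplications one
compares `S₀₁ Q₀₂ S₀₃ Q₀₄`, which corresponds to `(Φ ⊗ Φ) Δ`, with `S₀₁ S₀₃ Q₀₂ Q₀₄`, which
corresponds to `Δ Φ`. The two differ in the order of the middle factors, and the Yang-Baxter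
equation `Q₀₂ S₀₃ S₂₃ = S₂₃ S₀₃ Q₀₂` turns this into conjugation by `S₂₃`, the inverse of
`(R_τ)₂₃`.
-/

section Contraction

variable {k V W : Type*} [CommSemiring k] [AddCommMonoid V] [Module k V]
  [AddCommMonoid W] [Module k W]

/-- The slice map `x ⊗ a ↦ (η ↦ η x • a)`, i.e. `X ↦ (η ↦ (η ⊗ id)(X))`. It extends
`contractFst` to an arbitrary second factor, and turns an element of `V ⊗ W` into a map
`V* → W`. -/
noncomputable def contract : V ⊗[k] W →ₗ[k] Module.Dual k V →ₗ[k] W :=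
  dualTensorHom k (Module.Dual k V) W ∘ₗ (Module.Dual.eval k V).rTensor W

@[simp]
lemma contract_tmul (v : V) (w : W) (η : Module.Dual k V) :
    contract (v ⊗ₜ[k] w) η = η v • w := by
  simp [contract]

lemma map_contract_tmul {V' W' : Type*} [AddCommMonoid V'] [Module k V'] [AddCommMonoid W']
    [Module k W'] (v : V) (w : W) (v' : V') (w' : W')
    (ω : Module.Dual k V ⊗[k] Module.Dual k V') :
    map (contract (v ⊗ₜ w)) (contract (v' ⊗ₜ w')) ω = dualDistrib k V V' ω (v ⊗ₜ v') • w ⊗ₜ w' := by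
  induction ω with
  | zero => simp
  | add ω₁ ω₂ h₁ h₂ => simp only [map_add, LinearMap.add_apply, add_smul, h₁, h₂]
  | tmul f g =>
    rw [map_tmul, contract_tmul, contract_tmul, smul_tmul_smul, dualDistrib_apply]

end Contraction

section SecondFactor

variable {k A B C : Type*} (H : Type*) [CommSemiring k] [Semiring H] [Algebra k H]
  [Semiring A] [Algebra k A] [Semiring B] [Algebra k B] [Semiring C] [Algebra k C]

/-- The algebra map `id ⊗ φ`, which moves the second factor of an element of `H ⊗ A` along `φ`;
with `φ` the inclusion of a tensor factor it produces the leg notation `X₀ᵢ`. -/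
noncomputable def lTensorAlg (φ : A →ₐ[k] B) : H ⊗[k] A →ₐ[k] H ⊗[k] B :=
  Algebra.TensorProduct.map (AlgHom.id k H) φ

variable {H}

@[simp]
lemma lTensorAlg_tmul (φ : A →ₐ[k] B) (x : H) (a : A) :
    lTensorAlg H φ (x ⊗ₜ a) = x ⊗ₜ φ a := by
  simp [lTensorAlg]

lemma lTensorAlg_id (X : H ⊗[k] A) : lTensorAlg H (AlgHom.id k A) X = X := by
  simp [lTensorAlg]

lemma lTensorAlg_lTensorAlg (ψ : B →ₐ[k] C) (φ : A →ₐ[k] B) (X : H ⊗[k] A) :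
    lTensorAlg H ψ (lTensorAlg H φ X) = lTensorAlg H (ψ.comp φ) X :=
  (DFunLike.congr_fun (Algebra.TensorProduct.map_id_comp ψ φ) X).symm

lemma commute_lTensorAlg {φ : A →ₐ[k] B} {Y : H ⊗[k] B}
    (h : ∀ x a, Commute (x ⊗ₜ φ a) Y) (X : H ⊗[k] A) : Commute (lTensorAlg H φ X) Y := by
  induction X with
  | zero => simp
  | add X₁ X₂ h₁ h₂ => simpa only [map_add] using h₁.add_left h₂
  | tmul x a => simpa only [lTensorAlg_tmul] using h x a

lemma commute_lTensorAlg_one_tmul {φ : A →ₐ[k] B} {b : B} (h : ∀ a, Commute (φ a) b)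
    (X : H ⊗[k] A) : Commute (lTensorAlg H φ X) (1 ⊗ₜ b) :=
  commute_lTensorAlg (fun x a ↦ (Commute.one_right x).tmul (h a)) X

lemma contract_lTensorAlg (φ : A →ₐ[k] B) (X : H ⊗[k] A) (η : Module.Dual k H) :
    contract (lTensorAlg H φ X) η = φ (contract X η) := by
  induction X with
  | zero => simp
  | add X₁ X₂ h₁ h₂ => simp only [map_add, LinearMap.add_apply, h₁, h₂]
  | tmul x a => simp

lemma contract_one (η : Module.Dual k H) : contract (1 : H ⊗[k] A) η = η 1 • 1 :=
  contract_tmul 1 1 η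

lemma contract_one_tmul_mul (a : A) (X : H ⊗[k] A) (η : Module.Dual k H) :
    contract ((1 ⊗ₜ a) * X) η = a * contract X η := by
  induction X with
  | zero => simp
  | add X₁ X₂ h₁ h₂ => simp only [mul_add, map_add, LinearMap.add_apply, h₁, h₂]
  | tmul x b => simp

lemma contract_mul_one_tmul (X : H ⊗[k] A) (a : A) (η : Module.Dual k H) :
    contract (X * (1 ⊗ₜ a)) η = contract X η * a := by
  induction X with
  | zero => simp
  | add X₁ X₂ h₁ h₂ => simp only [add_mul, map_add, LinearMap.add_apply, h₁, h₂]
  | tmul x b => simp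

end SecondFactor

section DualComultiplication

variable {k H A B : Type*} [Field k] [Ring H] [Bialgebra k H] [FiniteDimensional k H]
  [Semiring A] [Algebra k A] [Semiring B] [Algebra k B]

lemma dualDistrib_comulDual (η : Module.Dual k H) :
    dualDistrib k H H (comulDual k H η) = η ∘ₗ LinearMap.mul' k H :=
  (dualDistribEquiv k H H).apply_symm_apply _

lemma map_contract_comulDual (X : H ⊗[k] A) (Y : H ⊗[k] B) (η : Module.Dual k H) :
    map (contract X) (contract Y) (comulDual k H η) =
      contract (lTensorAlg H Algebra.TensorProduct.includeLeft X *
        lTensorAlg H Algebra.TensorProduct.includeRight Y) η := by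
  induction X with
  | zero => simp
  | add X₁ X₂ h₁ h₂ => simp only [map_add, map_add_left, add_mul, LinearMap.add_apply, h₁, h₂]
  | tmul x a =>
    induction Y with
    | zero => simp
    | add Y₁ Y₂ h₁ h₂ => simp only [map_add, map_add_right, mul_add, LinearMap.add_apply, h₁, h₂]
    | tmul y b => simp [map_contract_tmul, dualDistrib_comulDual]

end DualComultiplication

section Antimultiplicative

variable {k H A B C : Type*} [CommSemiring k] [Semiring H] [Bialgebra k H]
  [Semiring A] [Algebra k A] [Semiring B] [Algebra k B] [Semiring C] [Algebra k C]

/-- The algebra map `Δ ⊗ id : H ⊗ A → H ⊗ (H ⊗ A)`, extending `deltaL` to an arbitrary second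
factor. -/
noncomputable def comulFst : H ⊗[k] A →ₐ[k] H ⊗[k] (H ⊗[k] A) :=
  (Algebra.TensorProduct.assoc k k k H H A).toAlgHom.comp
    (Algebra.TensorProduct.map (Bialgebra.comulAlgHom k H) (AlgHom.id k A))

lemma comulFst_tmul (x : H) (a : A) :
    comulFst (k := k) (x ⊗ₜ a) = TensorProduct.assoc k H H A (Coalgebra.comul x ⊗ₜ a) :=
  rfl

/-- The algebra map `ε ⊗ id : H ⊗ A → A`, the slice at the unit `ε` of `H*`. -/
noncomputable def counitFst : H ⊗[k] A →ₐ[k] A :=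
  (Algebra.TensorProduct.lid k A).toAlgHom.comp
    (Algebra.TensorProduct.map (Bialgebra.counitAlgHom k H) (AlgHom.id k A))

lemma counitFst_tmul (x : H) (a : A) :
    counitFst (k := k) (x ⊗ₜ a) = Coalgebra.counit (R := k) x • a := by
  simp [counitFst]

lemma contract_counit (X : H ⊗[k] A) : contract X Coalgebra.counit = counitFst X := by
  induction X with
  | zero => simp
  | add X₁ X₂ h₁ h₂ => simp only [map_add, LinearMap.add_apply, h₁, h₂]
  | tmul x a => simp [counitFst_tmul]

lemma counitFst_lTensorAlg (φ : A →ₐ[k] B) (X : H ⊗[k] A) :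
    counitFst (lTensorAlg H φ X) = φ (counitFst X) := by
  simp only [← contract_counit, contract_lTensorAlg]

lemma counitFst_comulFst (X : H ⊗[k] A) : counitFst (comulFst X) = X := by
  have counitFst_assoc (w : H ⊗[k] H) (a : A) : counitFst (TensorProduct.assoc k H H A (w ⊗ₜ a)) =
      TensorProduct.lid k H (Coalgebra.counit.rTensor H w) ⊗ₜ a := by
    induction w with
    | zero => simp
    | add w₁ w₂ h₁ h₂ => simp only [add_tmul, map_add, h₁, h₂]
    | tmul x y => simp [counitFst_tmul, smul_tmul']
  induction X with
  | zero => simp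
  | add X₁ X₂ h₁ h₂ => simp only [map_add, h₁, h₂]
  | tmul x a =>
    rw [comulFst_tmul, counitFst_assoc, Coalgebra.rTensor_counit_comul, lid_tmul, one_smul]

lemma comulFst_lTensorAlg (φ : A →ₐ[k] B) (X : H ⊗[k] A) :
    comulFst (lTensorAlg H φ X) = lTensorAlg H (lTensorAlg H φ) (comulFst X) := by
  have assoc_natural (w : H ⊗[k] H) (a : A) : TensorProduct.assoc k H H B (w ⊗ₜ φ a) =
      lTensorAlg H (lTensorAlg H φ) (TensorProduct.assoc k H H A (w ⊗ₜ a)) := by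
    induction w with
    | zero => simp
    | add w₁ w₂ h₁ h₂ => simp only [add_tmul, map_add, h₁, h₂]
    | tmul x y => simp
  induction X with
  | zero => simp
  | add X₁ X₂ h₁ h₂ => simp only [map_add, h₁, h₂]
  | tmul x a => simp only [lTensorAlg_tmul, comulFst_tmul, assoc_natural]

/-- `(Δ ⊗ id)(X) = X₂₃ X₁₃`. By `IsAntimultiplicative.contract_conv` this says that
`η ↦ (η ⊗ id)(X)` is multiplicative on `H*_op`. -/
def IsAntimultiplicative (X : H ⊗[k] A) : Prop :=
  comulFst (k := k) X = (1 ⊗ₜ X) * lTensorAlg H Algebra.TensorProduct.includeRight X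

namespace IsAntimultiplicative

protected lemma lTensorAlg {X : H ⊗[k] A} (hX : IsAntimultiplicative X) (φ : A →ₐ[k] B) :
    IsAntimultiplicative (lTensorAlg H φ X) := by
  rw [IsAntimultiplicative, comulFst_lTensorAlg, hX, map_mul, lTensorAlg_tmul,
    lTensorAlg_lTensorAlg, lTensorAlg_lTensorAlg]
  congr 2

protected lemma mul {X Y : H ⊗[k] A} (hX : IsAntimultiplicative X) (hY : IsAntimultiplicative Y)
    (hXY : Commute (lTensorAlg H Algebra.TensorProduct.includeRight X) ((1 : H) ⊗ₜ[k] Y)) :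
    IsAntimultiplicative (X * Y) := by
  rw [IsAntimultiplicative, map_mul, map_mul, hX, hY, hXY.mul_mul_mul_comm,
    Algebra.TensorProduct.tmul_mul_tmul, one_mul]

lemma mul_of_commute {φ : A →ₐ[k] C} {ψ : B →ₐ[k] C} (hφψ : ∀ a b, Commute (φ a) (ψ b))
    {X : H ⊗[k] A} {Y : H ⊗[k] B} (hX : IsAntimultiplicative X) (hY : IsAntimultiplicative Y) :
    IsAntimultiplicative (lTensorAlg H φ X * lTensorAlg H ψ Y) := by
  refine (hX.lTensorAlg φ).mul (hY.lTensorAlg ψ) ?_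
  rw [lTensorAlg_lTensorAlg]
  refine commute_lTensorAlg_one_tmul (fun a ↦ ?_) X
  exact (commute_lTensorAlg_one_tmul (fun b ↦ (hφψ a b).symm) Y).symm

end IsAntimultiplicative

end Antimultiplicative

section Convolution

variable {k H A : Type*} [Field k] [Ring H] [Bialgebra k H] [Semiring A] [Algebra k A]

lemma contract_conv (X : H ⊗[k] A) (ξ η : Module.Dual k H) :
    contract X (conv k H ξ η) = contract (contract (comulFst X) ξ) η := by
  have contract_assoc (w : H ⊗[k] H) (a : A) :
      contract (contract (TensorProduct.assoc k H H A (w ⊗ₜ a)) ξ) η =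
        LinearMap.mul' k k (map ξ η w) • a := by
    induction w with
    | zero => simp
    | add w₁ w₂ h₁ h₂ => simp only [add_tmul, map_add, LinearMap.add_apply, add_smul, h₁, h₂]
    | tmul x y => simp [mul_smul]
  induction X with
  | zero => simp
  | add X₁ X₂ h₁ h₂ => simp only [map_add, LinearMap.add_apply, h₁, h₂]
  | tmul x a => rw [comulFst_tmul, contract_assoc, contract_tmul]; rfl

protected lemma IsAntimultiplicative.contract_conv {X : H ⊗[k] A} (hX : IsAntimultiplicative X)
    (ξ η : Module.Dual k H) :
    contract X (conv k H ξ η) = contract X η * contract X ξ := by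
  rw [contract_conv, hX, contract_one_tmul_mul, contract_lTensorAlg,
    Algebra.TensorProduct.includeRight_apply, contract_mul_one_tmul]

end Convolution

section Legs

variable {k H : Type*} [Field k] [Ring H] [Bialgebra k H]

lemma contractFst_eq_contract (u : H ⊗[k] H) : contractFst k H u = contract u := by
  ext η
  induction u with
  | zero => simp [contractFst]
  | add u v hu hv => simp_all [contractFst]
  | tmul x y => simp [contractFst]

lemma contractSnd_eq_contract_comm (u : H ⊗[k] H) :
    contractSnd k H u = contract (Algebra.TensorProduct.comm k H H u) := by
  ext η
  induction u with
  | zero => simp [contractSnd]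
  | add u v hu hv => simp_all [contractSnd]
  | tmul x y => simp [contractSnd]

lemma leg12_eq_lTensorAlg (u : H ⊗[k] H) :
    leg12 k H u = lTensorAlg H Algebra.TensorProduct.includeLeft u :=
  rfl

lemma leg13_eq_lTensorAlg (u : H ⊗[k] H) :
    leg13 k H u = lTensorAlg H Algebra.TensorProduct.includeRight u :=
  rfl

lemma leg12_eq_assoc (u : H ⊗[k] H) :
    leg12 k H u = Algebra.TensorProduct.assoc k k k H H H (u ⊗ₜ 1) := by
  induction u with
  | zero => simp
  | add u v hu hv => simp only [map_add, add_tmul, hu, hv]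
  | tmul x y => rfl

lemma deltaL_eq_comulFst (u : H ⊗[k] H) : deltaL k H u = comulFst u :=
  rfl

lemma deltaL_tmul (x y : H) :
    deltaL k H (x ⊗ₜ y) = Algebra.TensorProduct.assoc k k k H H H (Coalgebra.comul x ⊗ₜ y) :=
  rfl

lemma deltaR_eq_lTensorAlg (u : H ⊗[k] H) :
    deltaR k H u = lTensorAlg H (Bialgebra.comulAlgHom k H) u :=
  rfl

end Legs

/-- The axioms of a universal R-matrix `S` for the bialgebra with the opposite multiplication,
without the intertwining axiom; as in `IsUnivRMatrix`, the inverse is part of the data. Examples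
are `R₂₁` and `(τ ⊗ τ)(R)`. The slices of such an `S` form a bialgebra map `H*_op → H`. -/
structure IsAntiRMatrix {k H : Type*} [Field k] [Ring H] [Bialgebra k H]
    (S Sinv : H ⊗[k] H) : Prop where
  mul_inv : S * Sinv = 1
  inv_mul : Sinv * S = 1
  deltaL_eq : deltaL k H S = leg23 k H S * leg13 k H S
  deltaR_eq : deltaR k H S = leg12 k H S * leg13 k H S

namespace IsAntiRMatrix

open Algebra.TensorProduct (includeLeft includeRight)

variable {k H A : Type*} [Field k] [Ring H] [Bialgebra k H] [Semiring A] [Algebra k A]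
  {S Sinv : H ⊗[k] H}

lemma isUnit (hS : IsAntiRMatrix S Sinv) : IsUnit S :=
  ⟨⟨S, Sinv, hS.mul_inv, hS.inv_mul⟩, rfl⟩

lemma isAntimultiplicative (hS : IsAntiRMatrix S Sinv) : IsAntimultiplicative S :=
  hS.deltaL_eq

lemma counitFst_eq_one (hS : IsAntiRMatrix S Sinv) : counitFst S = 1 := by
  have counitFst_delta : S = S * (1 ⊗ₜ counitFst S) := by
    simpa only [deltaL_eq_comulFst, counitFst_comulFst, leg23, mk_apply, leg13_eq_lTensorAlg,
      map_mul, counitFst_lTensorAlg, counitFst_tmul, Bialgebra.counit_one, one_smul,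
      Algebra.TensorProduct.includeRight_apply] using congr(counitFst $(hS.deltaL_eq))
  have one_tmul_counitFst : (1 : H) ⊗ₜ[k] counitFst S = 1 :=
    hS.isUnit.mul_eq_left.mp counitFst_delta.symm
  simpa [counitFst_tmul] using congr(counitFst $one_tmul_counitFst)

lemma lTensorAlg_counit_eq_one (hS : IsAntiRMatrix S Sinv) :
    lTensorAlg H (Bialgebra.counitAlgHom k H) S = 1 := by
  have counitFst_comp_comul : counitFst.comp (Bialgebra.comulAlgHom k H) = AlgHom.id k H := by
    ext x
    change TensorProduct.lid k H (Coalgebra.counit.rTensor H (Coalgebra.comul x)) = x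
    rw [Coalgebra.rTensor_counit_comul, lid_tmul, one_smul]
  have counitFst_comp_inl : (counitFst (k := k) (H := H)).comp includeLeft =
      (Algebra.ofId k H).comp (Bialgebra.counitAlgHom k H) := by
    ext x
    simp [counitFst_tmul, Algebra.ofId_apply, Algebra.algebraMap_eq_smul_one]
  have counitFst_comp_inr :
      (counitFst (k := k) (H := H)).comp includeRight = AlgHom.id k H := by
    ext x
    simp [counitFst_tmul]
  have counit_comp_ofId_comp : (Bialgebra.counitAlgHom k H).comp
      ((Algebra.ofId k H).comp (Bialgebra.counitAlgHom k H)) = Bialgebra.counitAlgHom k H := by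
    ext x
    simp
  have ofId_counit_mul :
      S = lTensorAlg H ((Algebra.ofId k H).comp (Bialgebra.counitAlgHom k H)) S * S := by
    simpa only [deltaR_eq_lTensorAlg, leg12_eq_lTensorAlg, leg13_eq_lTensorAlg, map_mul,
      lTensorAlg_lTensorAlg, counitFst_comp_comul, counitFst_comp_inl, counitFst_comp_inr,
      lTensorAlg_id] using congr(lTensorAlg H counitFst $(hS.deltaR_eq))
  have ofId_counit := hS.isUnit.mul_eq_right.mp ofId_counit_mul.symm
  simpa only [lTensorAlg_lTensorAlg, counit_comp_ofId_comp, map_one] using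
    congr(lTensorAlg H (Bialgebra.counitAlgHom k H) $ofId_counit)

lemma lTensorAlg_map_comp_comul (hS : IsAntiRMatrix S Sinv) (φ : H →ₐ[k] A) :
    lTensorAlg H ((Algebra.TensorProduct.map φ φ).comp (Bialgebra.comulAlgHom k H)) S =
      lTensorAlg H (includeLeft.comp φ) S *
        lTensorAlg H ((includeRight : A →ₐ[k] A ⊗[k] A).comp φ) S := by
  rw [← lTensorAlg_lTensorAlg, ← deltaR_eq_lTensorAlg, hS.deltaR_eq, map_mul, leg12_eq_lTensorAlg,
    leg13_eq_lTensorAlg, lTensorAlg_lTensorAlg, lTensorAlg_lTensorAlg,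
    Algebra.TensorProduct.map_comp_includeLeft, Algebra.TensorProduct.map_comp_includeRight]

end IsAntiRMatrix

section ThreeFactors

variable {k A B C D : Type*} [CommSemiring k] [Semiring A] [Algebra k A] [Semiring B]
  [Algebra k B] [Semiring C] [Algebra k C] [Semiring D] [Algebra k D]

/-- The cyclic permutation `x ⊗ (y ⊗ z) ↦ y ⊗ (z ⊗ x)`, which relates the axioms for `R₂₁` to
those for `R`. -/
noncomputable def rotate : A ⊗[k] (B ⊗[k] C) ≃ₐ[k] B ⊗[k] (C ⊗[k] A) :=
  (Algebra.TensorProduct.comm k A (B ⊗[k] C)).trans (Algebra.TensorProduct.assoc k k k B C A)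

lemma leftComm_assoc_tmul (w : A ⊗[k] B) (c : C) :
    Algebra.TensorProduct.leftComm k A B C (Algebra.TensorProduct.assoc k k k A B C (w ⊗ₜ c)) =
      Algebra.TensorProduct.assoc k k k B A C (Algebra.TensorProduct.comm k A B w ⊗ₜ c) := by
  induction w with
  | zero => simp
  | add w₁ w₂ h₁ h₂ => simp only [add_tmul, map_add, h₁, h₂]
  | tmul a b => rfl

lemma map_mul_of_anti {f : A →ₗ[k] C} {g : B →ₗ[k] D}
    (hf : ∀ x y, f (x * y) = f y * f x) (hg : ∀ x y, g (x * y) = g y * g x) (u v : A ⊗[k] B) :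
    map f g (u * v) = map f g v * map f g u := by
  induction u with
  | zero => simp
  | add u₁ u₂ h₁ h₂ => simp only [add_mul, mul_add, map_add, h₁, h₂]
  | tmul x y =>
    induction v with
    | zero => simp
    | add v₁ v₂ h₁ h₂ => simp only [add_mul, mul_add, map_add, h₁, h₂]
    | tmul z w => simp [hf, hg]

end ThreeFactors

section Transpose

variable {k H : Type*} [Field k] [Ring H] [Bialgebra k H]

lemma rotate_leg12 (u : H ⊗[k] H) :
    rotate (leg12 k H u) = leg13 k H (Algebra.TensorProduct.comm k H H u) := by
  induction u with
  | zero => simp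
  | add u v hu hv => simp only [map_add, hu, hv]
  | tmul x y => rfl

lemma rotate_leg13 (u : H ⊗[k] H) :
    rotate (leg13 k H u) = leg23 k H (Algebra.TensorProduct.comm k H H u) := by
  induction u with
  | zero => simp
  | add u v hu hv => simp only [map_add, hu, hv]
  | tmul x y => rfl

lemma rotate_deltaR (u : H ⊗[k] H) :
    rotate (deltaR k H u) = deltaL k H (Algebra.TensorProduct.comm k H H u) := by
  induction u with
  | zero => simp
  | add u v hu hv => simp only [map_add, hu, hv]
  | tmul x y => rfl

lemma IsUnivRMatrix.isAntiRMatrix_comm {R Rinv : H ⊗[k] H} (hR : IsUnivRMatrix k H R Rinv) :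
    IsAntiRMatrix (Algebra.TensorProduct.comm k H H R)
      (Algebra.TensorProduct.comm k H H Rinv) := by
  obtain ⟨mul_inv, inv_mul, deltaL_eq, deltaR_eq, -⟩ := hR
  have comm_comm : Algebra.TensorProduct.comm k H H (Algebra.TensorProduct.comm k H H R) = R :=
    TensorProduct.comm_comm ..
  refine ⟨by rw [← map_mul, mul_inv, map_one], by rw [← map_mul, inv_mul, map_one], ?_, ?_⟩
  · rw [← rotate_deltaR, deltaR_eq, map_mul, rotate_leg13, rotate_leg12]
  · apply rotate.injective
    rw [rotate_deltaR, map_mul, rotate_leg12, rotate_leg13, comm_comm, deltaL_eq]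

lemma IsUnivRMatrix.comm_mul_comm_comul {R Rinv : H ⊗[k] H} (hR : IsUnivRMatrix k H R Rinv)
    (h : H) :
    Algebra.TensorProduct.comm k H H R *
        Algebra.TensorProduct.comm k H H (Coalgebra.comul h) =
      Coalgebra.comul h * Algebra.TensorProduct.comm k H H R := by
  have comm_comm : Algebra.TensorProduct.comm k H H
      (TensorProduct.comm k H H (Coalgebra.comul h)) = Coalgebra.comul h :=
    TensorProduct.comm_comm ..
  rw [← map_mul, hR.2.2.2.2 h, map_mul, comm_comm]

end Transpose

section AntiEndomorphism

variable {k H : Type*} [Field k] [Ring H] [Bialgebra k H]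

lemma IsUnivRMatrix.isAntiRMatrix_map {R Rinv : H ⊗[k] H} (hR : IsUnivRMatrix k H R Rinv)
    {τ : H →ₗ[k] H} (τ_mul : ∀ x y, τ (x * y) = τ y * τ x) (τ_one : τ 1 = 1)
    (comul_comp : Coalgebra.comul (R := k) ∘ₗ τ = map τ τ ∘ₗ Coalgebra.comul) :
    IsAntiRMatrix (map τ τ R) (map τ τ Rinv) := by
  obtain ⟨mul_inv, inv_mul, deltaL_eq, deltaR_eq, -⟩ := hR
  have map₂_mul := map_mul_of_anti τ_mul τ_mul
  have map₃_mul := map_mul_of_anti τ_mul map₂_mul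
  have map₂_one : map τ τ (1 : H ⊗[k] H) = 1 := by simp [Algebra.TensorProduct.one_def, τ_one]
  have leg12_map (u) : leg12 k H (map τ τ u) = map τ (map τ τ) (leg12 k H u) := by
    simp only [leg12, ← LinearMap.comp_apply, ← map_comp]
    congr 2
    ext x
    simp [τ_one]
  have leg13_map (u) : leg13 k H (map τ τ u) = map τ (map τ τ) (leg13 k H u) := by
    simp only [leg13, ← LinearMap.comp_apply, ← map_comp]
    congr 2
    ext x
    simp [τ_one]
  have leg23_map (u) : leg23 k H (map τ τ u) = map τ (map τ τ) (leg23 k H u) := by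
    simp [leg23, τ_one]
  have deltaL_map (u) : deltaL k H (map τ τ u) = map τ (map τ τ) (deltaL k H u) := by
    simp only [deltaL, LinearMap.comp_apply, LinearEquiv.coe_coe, map_map_assoc]
    simp only [← LinearMap.comp_apply, ← map_comp, comul_comp, LinearMap.id_comp,
      LinearMap.comp_id]
  have deltaR_map (u) : deltaR k H (map τ τ u) = map τ (map τ τ) (deltaR k H u) := by
    simp only [deltaR, ← LinearMap.comp_apply, ← map_comp, comul_comp, LinearMap.id_comp,
      LinearMap.comp_id]
  refine ⟨?_, ?_, ?_, ?_⟩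
  · rw [← map₂_mul, inv_mul, map₂_one]
  · rw [← map₂_mul, mul_inv, map₂_one]
  · rw [deltaL_map, deltaL_eq, map₃_mul, leg23_map, leg13_map]
  · rw [deltaR_map, deltaR_eq, map₃_mul, leg12_map, leg13_map]

end AntiEndomorphism

section YangBaxter

variable {k H : Type*} [Field k] [Ring H] [Bialgebra k H]

lemma leftComm_leg13 (u : H ⊗[k] H) :
    Algebra.TensorProduct.leftComm k H H H (leg13 k H u) = leg23 k H u := by
  induction u with
  | zero => simp
  | add u v hu hv => simp only [map_add, hu, hv]
  | tmul x y => rfl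

lemma leftComm_leg23 (u : H ⊗[k] H) :
    Algebra.TensorProduct.leftComm k H H H (leg23 k H u) = leg13 k H u := by
  induction u with
  | zero => simp
  | add u v hu hv => simp only [map_add, hu, hv]
  | tmul x y => rfl

lemma leg12_mul_leftComm_deltaL {Q : H ⊗[k] H}
    (hQ : ∀ h, Q * Algebra.TensorProduct.comm k H H (Coalgebra.comul h) = Coalgebra.comul h * Q)
    (u : H ⊗[k] H) :
    leg12 k H Q * Algebra.TensorProduct.leftComm k H H H (deltaL k H u) =
      deltaL k H u * leg12 k H Q := by
  induction u with
  | zero => simp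
  | add u v hu hv => simp only [map_add, mul_add, add_mul, hu, hv]
  | tmul x y =>
    rw [deltaL_tmul, leftComm_assoc_tmul, leg12_eq_assoc, ← map_mul, ← map_mul,
      Algebra.TensorProduct.tmul_mul_tmul, Algebra.TensorProduct.tmul_mul_tmul, hQ, one_mul,
      mul_one]

lemma IsAntiRMatrix.yangBaxter {Q S Sinv : H ⊗[k] H} (hS : IsAntiRMatrix S Sinv)
    (hQ : ∀ h, Q * Algebra.TensorProduct.comm k H H (Coalgebra.comul h) =
      Coalgebra.comul h * Q) :
    leg12 k H Q * leg13 k H S * leg23 k H S = leg23 k H S * leg13 k H S * leg12 k H Q := by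
  simpa only [hS.deltaL_eq, map_mul, leftComm_leg13, leftComm_leg23, mul_assoc]
    using leg12_mul_leftComm_deltaL hQ S

end YangBaxter

section TensorSquare

open Algebra.TensorProduct (includeLeft includeRight)

section Bialgebra

variable {k H : Type*} [CommSemiring k] [Semiring H] [Bialgebra k H]

lemma mul'_map_counit (u : H ⊗[k] H) :
    LinearMap.mul' k k (map Coalgebra.counit Coalgebra.counit u) =
      Bialgebra.counitAlgHom k (H ⊗[k] H) u := by
  induction u with
  | zero => simp
  | add u v hu hv => simp only [map_add, hu, hv]
  | tmul x y => simp [mul_comm]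

lemma counitAlgHom_comp_includeLeft :
    (Bialgebra.counitAlgHom k (H ⊗[k] H)).comp includeLeft = Bialgebra.counitAlgHom k H := by
  ext x
  simp

lemma counitAlgHom_comp_includeRight :
    (Bialgebra.counitAlgHom k (H ⊗[k] H)).comp includeRight = Bialgebra.counitAlgHom k H := by
  ext x
  simp

lemma comulAlgHom_comp_includeLeft :
    (Bialgebra.comulAlgHom k (H ⊗[k] H)).comp includeLeft =
      (Algebra.TensorProduct.map includeLeft includeLeft).comp (Bialgebra.comulAlgHom k H) := by
  ext x
  change TensorProduct.tensorTensorTensorComm k H H H H (Coalgebra.comul x ⊗ₜ Coalgebra.comul 1) =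
    map _ _ (Coalgebra.comul x)
  rw [Bialgebra.comul_one, Algebra.TensorProduct.one_def]
  induction (Coalgebra.comul x : H ⊗[k] H) with
  | zero => simp
  | add u v hu hv => simp only [map_add, add_tmul, hu, hv]
  | tmul y z => rfl

lemma comulAlgHom_comp_includeRight :
    (Bialgebra.comulAlgHom k (H ⊗[k] H)).comp includeRight =
      (Algebra.TensorProduct.map includeRight includeRight).comp (Bialgebra.comulAlgHom k H) := by
  ext x
  change TensorProduct.tensorTensorTensorComm k H H H H (Coalgebra.comul 1 ⊗ₜ Coalgebra.comul x) =
    map _ _ (Coalgebra.comul x)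
  rw [Bialgebra.comul_one, Algebra.TensorProduct.one_def]
  induction (Coalgebra.comul x : H ⊗[k] H) with
  | zero => simp
  | add u v hu hv => simp only [map_add, tmul_add, hu, hv]
  | tmul y z => rfl

end Bialgebra

variable {k H : Type*} [Field k] [Ring H] [Bialgebra k H]

lemma comulSq_eq_comulAlgHom (u : H ⊗[k] H) :
    comulSq k H u = Bialgebra.comulAlgHom k (H ⊗[k] H) u :=
  rfl

lemma sqleg23_eq_map (u : H ⊗[k] H) :
    sqleg23 k H u = Algebra.TensorProduct.map includeRight includeLeft u :=
  rfl

lemma commute_includeLeft_includeLeft_sqleg23 (x : H) (u : H ⊗[k] H) :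
    Commute (includeLeft (R := k) (S := k) (B := H ⊗[k] H) (x ⊗ₜ[k] (1 : H)))
      (sqleg23 k H u) := by
  induction u with
  | zero => simp
  | add u v hu hv => simpa only [map_add] using hu.add_right hv
  | tmul y z => simp [sqleg23, Commute, SemiconjBy]

lemma commute_includeRight_includeRight_sqleg23 (x : H) (u : H ⊗[k] H) :
    Commute (includeRight (R := k) (A := H ⊗[k] H) ((1 : H) ⊗ₜ[k] x)) (sqleg23 k H u) := by
  induction u with
  | zero => simp
  | add u v hu hv => simpa only [map_add] using hu.add_right hv
  | tmul y z => simp [sqleg23, Commute, SemiconjBy]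

lemma sqleg23_mul_cancel {S Sinv : H ⊗[k] H} (h : S * Sinv = 1) :
    sqleg23 k H S * sqleg23 k H Sinv = 1 := by
  rw [sqleg23_eq_map, sqleg23_eq_map, ← map_mul, h, map_one]

lemma mul_mul_mul_eq_conj {M : Type*} [Monoid M] {a b c d s sinv : M} (hs : s * sinv = 1)
    (has : Commute a s) (hds : Commute d sinv) (hbc : b * c * s = s * c * b) :
    a * b * (c * d) = s * (a * c * (b * d)) * sinv :=
  calc a * b * (c * d) = a * (b * c * (s * sinv)) * d := by rw [hs, mul_one]; simp only [mul_assoc]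
    _ = a * (b * c * s) * (sinv * d) := by simp only [mul_assoc]
    _ = a * s * (c * b) * (d * sinv) := by rw [hbc, hds.eq]; simp only [mul_assoc]
    _ = s * (a * c * (b * d)) * sinv := by rw [has.eq]; simp only [mul_assoc]

lemma IsAntiRMatrix.includeLeft_mul_includeRight_eq_twist {S Sinv Q Qinv : H ⊗[k] H}
    (hS : IsAntiRMatrix S Sinv) (hQ : IsAntiRMatrix Q Qinv)
    (hQ_comul : ∀ h, Q * Algebra.TensorProduct.comm k H H (Coalgebra.comul h) =
      Coalgebra.comul h * Q) :
    lTensorAlg H includeLeft (leg12 k H S * leg13 k H Q) *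
        lTensorAlg H includeRight (leg12 k H S * leg13 k H Q) =
      (1 ⊗ₜ sqleg23 k H S) *
        lTensorAlg H (Bialgebra.comulAlgHom k (H ⊗[k] H)) (leg12 k H S * leg13 k H Q) *
        (1 ⊗ₜ sqleg23 k H Sinv) := by
  simp only [leg12_eq_lTensorAlg, leg13_eq_lTensorAlg, map_mul, lTensorAlg_lTensorAlg,
    comulAlgHom_comp_includeLeft, comulAlgHom_comp_includeRight, hS.lTensorAlg_map_comp_comul,
    hQ.lTensorAlg_map_comp_comul]
  let ι₁₂ : H ⊗[k] H →ₐ[k] (H ⊗[k] H) ⊗[k] (H ⊗[k] H) := includeLeft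
  let ι₃₄ : H ⊗[k] H →ₐ[k] (H ⊗[k] H) ⊗[k] (H ⊗[k] H) := includeRight
  set S₀₁ := lTensorAlg H (ι₁₂.comp includeLeft) S
  set Q₀₂ := lTensorAlg H (ι₁₂.comp includeRight) Q
  set S₀₃ := lTensorAlg H (ι₃₄.comp includeLeft) S
  set Q₀₄ := lTensorAlg H (ι₃₄.comp includeRight) Q
  set S₂₃ : H ⊗[k] ((H ⊗[k] H) ⊗[k] (H ⊗[k] H)) := 1 ⊗ₜ sqleg23 k H S
  set Sinv₂₃ : H ⊗[k] ((H ⊗[k] H) ⊗[k] (H ⊗[k] H)) := 1 ⊗ₜ sqleg23 k H Sinv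
  have commute_S₀₁ : Commute S₀₁ S₂₃ :=
    commute_lTensorAlg_one_tmul (commute_includeLeft_includeLeft_sqleg23 · S) S
  have commute_Q₀₄ : Commute Q₀₄ Sinv₂₃ :=
    commute_lTensorAlg_one_tmul (commute_includeRight_includeRight_sqleg23 · Sinv) Q
  have S₂₃_mul_cancel : S₂₃ * Sinv₂₃ = 1 := by
    simp only [S₂₃, Sinv₂₃, Algebra.TensorProduct.tmul_mul_tmul, sqleg23_mul_cancel hS.mul_inv,
      one_mul, ← Algebra.TensorProduct.one_def]
  have yangBaxter : Q₀₂ * S₀₃ * S₂₃ = S₂₃ * S₀₃ * Q₀₂ := by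
    have yangBaxter_map := congr(lTensorAlg H
      (Algebra.TensorProduct.map (includeRight : H →ₐ[k] H ⊗[k] H)
        (includeLeft : H →ₐ[k] H ⊗[k] H)) $(hS.yangBaxter hQ_comul))
    simpa only [map_mul, leg12_eq_lTensorAlg, leg13_eq_lTensorAlg, lTensorAlg_lTensorAlg, leg23,
      mk_apply, lTensorAlg_tmul, Algebra.TensorProduct.map_comp_includeLeft,
      Algebra.TensorProduct.map_comp_includeRight, ← sqleg23_eq_map] using yangBaxter_map
  exact mul_mul_mul_eq_conj S₂₃_mul_cancel commute_S₀₁ commute_Q₀₄ yangBaxter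

end TensorSquare

theorem Phi_bialgebra_hom_to_twisted_square_general
    {k H : Type*} [Field k] [Ring H] [Bialgebra k H] [FiniteDimensional k H]
    (R Rinv : H ⊗[k] H) (hR : IsUnivRMatrix k H R Rinv)
    (S Sinv : H ⊗[k] H) (hS : IsAntiRMatrix S Sinv) :
    letI Φ : Module.Dual k H →ₗ[k] H ⊗[k] H :=
      map (contractFst k H S) (contractSnd k H R) ∘ₗ comulDual k H
    Φ (Coalgebra.counit (R := k) (A := H)) = 1 ∧
    (∀ η ξ : Module.Dual k H, Φ (conv k H ξ η) = Φ η * Φ ξ) ∧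
    (∀ η : Module.Dual k H, map Φ Φ (comulDual k H η) =
      sqleg23 k H S * comulSq k H (Φ η) * sqleg23 k H Sinv) ∧
    (∀ η : Module.Dual k H, LinearMap.mul' k k
      (map (Coalgebra.counit (R := k)) (Coalgebra.counit (R := k)) (Φ η)) = η 1) := by
  set Q := Algebra.TensorProduct.comm k H H R
  have hQ := hR.isAntiRMatrix_comm
  have Φ_eq_contract : map (contractFst k H S) (contractSnd k H R) ∘ₗ comulDual k H =
      contract (leg12 k H S * leg13 k H Q) := by
    ext1 η
    rw [contractFst_eq_contract, contractSnd_eq_contract_comm, LinearMap.comp_apply,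
      map_contract_comulDual, leg12_eq_lTensorAlg, leg13_eq_lTensorAlg]
  rw [Φ_eq_contract]
  refine ⟨?_, fun η ξ ↦ ?_, fun η ↦ ?_, fun η ↦ ?_⟩
  · rw [contract_counit, map_mul, leg12_eq_lTensorAlg, leg13_eq_lTensorAlg, counitFst_lTensorAlg,
      counitFst_lTensorAlg, hS.counitFst_eq_one, hQ.counitFst_eq_one, map_one, map_one, one_mul]
  · rw [leg12_eq_lTensorAlg, leg13_eq_lTensorAlg]
    have includes_commute (x y : H) :
        Commute (x ⊗ₜ[k] (1 : H)) ((1 : H) ⊗ₜ[k] y) :=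
      (Commute.one_right x).tmul (Commute.one_left y)
    exact (hS.isAntimultiplicative.mul_of_commute includes_commute
      hQ.isAntimultiplicative).contract_conv ξ η
  · rw [map_contract_comulDual,
      hS.includeLeft_mul_includeRight_eq_twist hQ hR.comm_mul_comm_comul, contract_mul_one_tmul,
      contract_one_tmul_mul, contract_lTensorAlg, comulSq_eq_comulAlgHom]
  · rw [mul'_map_counit, ← contract_lTensorAlg, map_mul, leg12_eq_lTensorAlg, leg13_eq_lTensorAlg,
      lTensorAlg_lTensorAlg, lTensorAlg_lTensorAlg, counitAlgHom_comp_includeLeft,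
      counitAlgHom_comp_includeRight, hS.lTensorAlg_counit_eq_one, hQ.lTensorAlg_counit_eq_one,
      one_mul, contract_one, smul_eq_mul, mul_one]

/-- let `H` be a finite-dimensional quasitriangular bialgebra with R-matrix
`R` and skew involution `τ`, and let `Φ⁺(η) = ⟨η, τ(R₁)⟩ τ(R₂)`, `Φ⁻(η) = ⟨η, R₂⟩ R₁`.
Then `Φ : η ↦ Φ⁺(η⁽¹⁾) ⊗ Φ⁻(η⁽²⁾)` is a bialgebra homomorphism from `H*_op` to the
twisted tensor square `H ⊗_{R_τ} H` (where `R_τ = (τ⊗τ)(R⁻¹)`): it is unital and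
multiplicative for the opposite convolution product, and intertwines the dual
comultiplication with the `(R_τ)₂₃`-twisted comultiplication of `H ⊗ H`, as well as the
counits. -/
theorem Phi_bialgebra_hom_to_twisted_square
    {k H : Type*} [Field k] [Ring H] [Bialgebra k H] [FiniteDimensional k H]
    (R Rinv : H ⊗[k] H) (hR : IsUnivRMatrix k H R Rinv)
    (τ : H →ₗ[k] H) (hτ : IsSkewInvolution k H τ) :
    letI Φ : Module.Dual k H →ₗ[k] H ⊗[k] H :=
      (TensorProduct.map (contractFst k H ((TensorProduct.map τ τ) R))
        (contractSnd k H R)) ∘ₗ comulDual k H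
    -- Φ is an algebra map from H*_op :
    (Φ (Coalgebra.counit (R := k) (A := H)) = 1) ∧
    (∀ η ξ : Module.Dual k H, Φ (conv k H ξ η) = Φ η * Φ ξ) ∧
    -- Φ intertwines the dual comultiplication with the twisted comultiplication :
    (∀ η : Module.Dual k H,
      (TensorProduct.map Φ Φ) (comulDual k H η) =
        sqleg23 k H ((TensorProduct.map τ τ) R) * comulSq k H (Φ η) *
          sqleg23 k H ((TensorProduct.map τ τ) Rinv)) ∧
    -- Φ respects the counits :
    (∀ η : Module.Dual k H,
      (LinearMap.mul' k k) ((TensorProduct.map (Coalgebra.counit (R := k))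
        (Coalgebra.counit (R := k))) (Φ η)) = η 1) :=
  Phi_bialgebra_hom_to_twisted_square_general R Rinv hR _ _
    (hR.isAntiRMatrix_map hτ.2.1 hτ.2.2.1 hτ.2.2.2.1)
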